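/- A multinomial parameter drawn uniformly at random from the simplex induces a uniform distribution over empirical distributions: for every p̂ ∈ Δ_{k,n}, the integral ∫_{Δ_k} P_p(p̂) dσ(p), where σ is the (k−1)-dimensional Lebesgue (surface) measure on Δ_k, equals σ(Δ_k)/|Δ_{k,n}|; in particular this integral has the same value for every p̂ ∈ Δ_{k,n}, and |Δ_{k,n}| = C(n+k−1, k−1). -/

import Mathlib

open MeasureTheory Finset
open scoped ENNReal Classical

noncomputable section

/-- The discrete simplex of empirical count vectors from `n` samples over `k` categories. -/
def discSimplex (k n : ℕ) : Finset (Fin k → ℕ) :=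
  (Fintype.piFinset fun _ : Fin k => Finset.range (n + 1)).filter fun c => ∑ i, c i = n

/-- The probability simplex `Δ_k ⊆ ℝ^k`. -/
def probSimplex (k : ℕ) : Set (EuclideanSpace ℝ (Fin k)) :=
  {p | (∀ i, 0 ≤ p i) ∧ ∑ i, p i = 1}

/-- Multinomial probability of observing the empirical count vector `c` under parameter `p`. -/
def multProb (k : ℕ) (p : EuclideanSpace ℝ (Fin k)) (c : Fin k → ℕ) : ℝ :=
  (Nat.multinomial Finset.univ c : ℝ) * ∏ i, p i ^ c i

/-- The `(k-1)`-dimensional Lebesgue (surface) measure on `Δ_k ⊆ ℝ^k`, realized as the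
`(k-1)`-dimensional Hausdorff measure on Euclidean space. -/
def surfMeasure (k : ℕ) : Measure (EuclideanSpace ℝ (Fin k)) :=
  Measure.hausdorffMeasure ((k : ℝ) - 1)

/-!
Parametrize the hyperplane `∑ i, p i = 1` affinely by all coordinates but one. The pullback of the
surface measure is translation invariant and finite on compact sets, hence a multiple `κ` of
Lebesgue measure. In this chart Dirichlet's integral `∫_Δ ∏ i, p i ^ (α i - 1) / Γ(α i)` becomes the
value at `1` of an iterated convolution of the kernels `s₊ ^ (α i - 1) / Γ(α i)`, which by the beta
integral form a convolution semigroup; it therefore equals `κ / Γ(∑ i, α i)`, and the case `α = 1`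
expresses `κ` through `σ(Δ)`. For `α = c + 1` the answer depends on `c` only through
`n = ∑ i, c i`, and multiplying by `n!` turns it into `σ(Δ)` divided by the stars-and-bars count.
-/

section AffineMap

variable {E V P : Type*}
  [NormedAddCommGroup E] [NormedSpace ℝ E] [FiniteDimensional ℝ E]
  [MeasurableSpace E] [BorelSpace E]
  [NormedAddCommGroup V] [NormedSpace ℝ V] [MetricSpace P] [NormedAddTorsor V P]
  [MeasurableSpace P] [BorelSpace P] {φ : E →ᵃ[ℝ] P}

lemma measurableEmbedding_of_injective_affineMap (hφ : Function.Injective φ) :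
    MeasurableEmbedding φ := by
  have : ProperSpace E := FiniteDimensional.proper ℝ E
  obtain ⟨K, hK⟩ := φ.antilipschitzWith_of_finiteDimensional hφ
  obtain ⟨L, hL⟩ := φ.lipschitzWith_of_finiteDimensional
  exact (hK.isClosedEmbedding hL.uniformContinuous).measurableEmbedding

theorem exists_comap_hausdorffMeasure_eq_smul (hφ : Function.Injective φ)
    (μ : Measure E) [μ.IsAddHaarMeasure] :
    ∃ κ : NNReal, (μH[Module.finrank ℝ E] : Measure P).comap φ = κ • μ := by
  have hemb := measurableEmbedding_of_injective_affineMap hφ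
  have : ProperSpace E := FiniteDimensional.proper ℝ E
  set ν := (μH[Module.finrank ℝ E] : Measure P).comap φ
  have hν (s : Set E) : ν s = μH[Module.finrank ℝ E] (φ '' s) :=
    hemb.comap_apply _ s
  have hfinite : IsFiniteMeasureOnCompacts ν := by
    refine ⟨fun s hs => ?_⟩
    obtain ⟨K, hK⟩ := φ.lipschitzWith_of_finiteDimensional
    calc ν s ≤ (K : ℝ≥0∞) ^ (Module.finrank ℝ E : ℝ) * μH[Module.finrank ℝ E] s :=
          (hν s).trans_le (hK.hausdorffMeasure_image_le (Nat.cast_nonneg _) s)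
      _ < ∞ := ENNReal.mul_lt_top (by finiteness) hs.measure_lt_top
  have hinvariant : ν.IsAddLeftInvariant := by
    refine (forall_measure_preimage_add_iff ν).1 fun g s _ => ?_
    have himage : φ '' ((g + ·) ⁻¹' s) = (φ.linear g +ᵥ ·) ⁻¹' (φ '' s) := by
      ext p
      constructor
      · rintro ⟨x, hx, rfl⟩
        exact ⟨g + x, hx, φ.map_vadd x g⟩
      · rintro ⟨x, hx, hxp⟩
        refine ⟨-g + x, by simpa using hx, ?_⟩
        rw [← vadd_eq_add, φ.map_vadd, hxp, map_neg, neg_vadd_vadd]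
    rw [hν, hν, himage, measure_preimage_vadd]
  exact ⟨_, Measure.isAddLeftInvariant_eq_smul ν μ⟩

end AffineMap

/-- The Riemann–Liouville kernel `s₊ ^ (α - 1) / Γ(α)`. The value at `s = 0` is kept, so that for
`α = 1` it is the indicator of the closed half-line, and products of kernels do not vanish on the
boundary of the closed simplex. -/
def riemannLiouvilleKernel (α s : ℝ) : ℝ≥0∞ :=
  (Set.Ici 0).indicator (fun x => ENNReal.ofReal (x ^ (α - 1) / Real.Gamma α)) s

namespace riemannLiouvilleKernel

variable {α β s t : ℝ}

lemma apply_of_nonneg (hs : 0 ≤ s) :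
    riemannLiouvilleKernel α s = ENNReal.ofReal (s ^ (α - 1) / Real.Gamma α) :=
  Set.indicator_of_mem hs _

lemma apply_of_neg (hs : s < 0) : riemannLiouvilleKernel α s = 0 :=
  Set.indicator_of_notMem hs.not_ge _

@[fun_prop]
lemma measurable (α : ℝ) : Measurable (riemannLiouvilleKernel α) :=
  Measurable.indicator (by fun_prop) measurableSet_Ici

lemma apply_mul (ht : 0 < t) (s : ℝ) :
    riemannLiouvilleKernel α (t * s)
      = ENNReal.ofReal (t ^ (α - 1)) * riemannLiouvilleKernel α s := by
  rcases lt_or_ge s 0 with hs | hs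
  · rw [apply_of_neg hs, apply_of_neg (mul_neg_of_pos_of_neg ht hs), mul_zero]
  · rw [apply_of_nonneg hs, apply_of_nonneg (by positivity), ← ENNReal.ofReal_mul (by positivity),
      Real.mul_rpow ht.le hs, mul_div_assoc]

lemma mul_one_sub_ae_eq_betaPDF (hα : 0 < α) (hβ : 0 < β) :
    (fun s => riemannLiouvilleKernel α s * riemannLiouvilleKernel β (1 - s)) =ᵐ[volume]
      fun s => riemannLiouvilleKernel (α + β) 1 * ProbabilityTheory.betaPDF α β s := by
  filter_upwards [volume.ae_ne 0, volume.ae_ne 1] with s hs0 hs1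
  rcases hs0.lt_or_gt with hneg | hpos
  · rw [apply_of_neg hneg, ProbabilityTheory.betaPDF_eq_zero_of_nonpos hneg.le, zero_mul, mul_zero]
  rcases hs1.lt_or_gt with hlt | hgt
  · have hs : 0 < 1 - s := sub_pos.2 hlt
    rw [apply_of_nonneg hpos.le, apply_of_nonneg hs.le, apply_of_nonneg zero_le_one,
      ProbabilityTheory.betaPDF_of_pos_lt_one hpos hlt, ← ENNReal.ofReal_mul (by positivity),
      ← ENNReal.ofReal_mul (by positivity), ProbabilityTheory.beta, Real.one_rpow]
    field_simp
  · rw [apply_of_neg (sub_neg.2 hgt), ProbabilityTheory.betaPDF_eq_zero_of_one_le hgt.le, mul_zero,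
      mul_zero]

lemma lintegral_mul_one_sub (hα : 0 < α) (hβ : 0 < β) :
    ∫⁻ s, riemannLiouvilleKernel α s * riemannLiouvilleKernel β (1 - s)
      = riemannLiouvilleKernel (α + β) 1 := by
  rw [lintegral_congr_ae (mul_one_sub_ae_eq_betaPDF hα hβ),
    lintegral_const_mul _ (by unfold ProbabilityTheory.betaPDF; fun_prop),
    ProbabilityTheory.lintegral_betaPDF_eq_one hα hβ, mul_one]

/-- At `t = 0` this fails when `α + β = 1`: the left side is `0`, the right side `1`. -/
lemma lintegral_mul_sub (hα : 0 < α) (hβ : 0 < β) (ht : t ≠ 0) :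
    ∫⁻ s, riemannLiouvilleKernel α s * riemannLiouvilleKernel β (t - s)
      = riemannLiouvilleKernel (α + β) t := by
  rcases ht.lt_or_gt with hneg | hpos
  · rw [apply_of_neg hneg, lintegral_eq_zero_iff (by fun_prop)]
    refine .of_forall fun s => ?_
    rcases lt_or_ge s 0 with hs | hs
    · simp [apply_of_neg hs]
    · simp [apply_of_neg (show t - s < 0 by linarith)]
  · have hpow : t * (t ^ (α - 1) * t ^ (β - 1)) = t ^ (α + β - 1) := by
      rw [← Real.rpow_add hpos, mul_comm, ← Real.rpow_add_one hpos.ne']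
      ring_nf
    calc ∫⁻ s, riemannLiouvilleKernel α s * riemannLiouvilleKernel β (t - s)
        = ENNReal.ofReal t * ∫⁻ s, riemannLiouvilleKernel α (t * s)
            * riemannLiouvilleKernel β (t - t * s) := by
          conv_lhs => rw [← Real.smul_map_volume_mul_left hpos.ne']
          rw [lintegral_smul_measure, lintegral_map (by fun_prop) (by fun_prop),
            abs_of_pos hpos, smul_eq_mul]
      _ = ENNReal.ofReal t * ∫⁻ s, (ENNReal.ofReal (t ^ (α - 1)) * ENNReal.ofReal (t ^ (β - 1)))
            * (riemannLiouvilleKernel α s * riemannLiouvilleKernel β (1 - s)) := by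
          simp_rw [← mul_one_sub t, apply_mul hpos, mul_mul_mul_comm]
      _ = riemannLiouvilleKernel (α + β) t := by
          rw [lintegral_const_mul _ (by fun_prop), lintegral_mul_one_sub hα hβ,
            ← ENNReal.ofReal_mul (by positivity), ← mul_assoc, ← ENNReal.ofReal_mul hpos.le, hpow,
            ← apply_mul hpos, mul_one]

lemma lintegral_prod_mul_sub_sum {m : ℕ} {α : Fin m → ℝ} (hα : ∀ i, 0 < α i) (hβ : 0 < β)
    (ht : t ≠ 0) :
    ∫⁻ x : Fin m → ℝ, (∏ i, riemannLiouvilleKernel (α i) (x i))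
        * riemannLiouvilleKernel β (t - ∑ i, x i)
      = riemannLiouvilleKernel (∑ i, α i + β) t := by
  induction m generalizing t with
  | zero => simp [lintegral_unique, volume_pi]
  | succ m ih =>
    have hsum : 0 < ∑ i : Fin m, α i.succ + β :=
      add_pos_of_nonneg_of_pos (sum_nonneg fun i _ => (hα i.succ).le) hβ
    calc ∫⁻ x : Fin (m + 1) → ℝ, (∏ i, riemannLiouvilleKernel (α i) (x i))
          * riemannLiouvilleKernel β (t - ∑ i, x i)
        = ∫⁻ s, ∫⁻ y : Fin m → ℝ, riemannLiouvilleKernel (α 0) s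
            * ((∏ i : Fin m, riemannLiouvilleKernel (α i.succ) (y i))
              * riemannLiouvilleKernel β (t - s - ∑ i, y i)) := by
          rw [← ((volume_preserving_piFinSuccAbove (fun _ => ℝ) (0 : Fin (m + 1))).symm
              _).lintegral_comp (by fun_prop), Measure.volume_eq_prod,
            lintegral_prod _ (by fun_prop)]
          simp only [MeasurableEquiv.piFinSuccAbove_symm_apply, Fin.insertNthEquiv,
            Equiv.coe_fn_mk, Fin.insertNth_zero', Fin.prod_univ_succ, Fin.sum_univ_succ,
            Fin.cons_zero, Fin.cons_succ, mul_assoc, sub_sub]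
      _ = ∫⁻ s, riemannLiouvilleKernel (α 0) s
            * riemannLiouvilleKernel (∑ i : Fin m, α i.succ + β) (t - s) := by
          refine lintegral_congr_ae ?_
          filter_upwards [volume.ae_ne t] with s hs
          rw [lintegral_const_mul _ (by fun_prop),
            ih (fun i => hα i.succ) (sub_ne_zero.2 hs.symm)]
      _ = riemannLiouvilleKernel (∑ i, α i + β) t := by
          rw [lintegral_mul_sub (hα 0) hsum ht, Fin.sum_univ_succ, add_assoc]

end riemannLiouvilleKernel

/-- The affine parametrization of the hyperplane `∑ i, p i = 1` by all coordinates but the zeroth,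
which is recovered as `1 - ∑ i, x i`. -/
def simplexChart (m : ℕ) : (Fin m → ℝ) →ᵃ[ℝ] EuclideanSpace ℝ (Fin (m + 1)) :=
  (WithLp.linearEquiv 2 ℝ (Fin (m + 1) → ℝ)).symm.toLinearMap.toAffineMap.comp <|
    AffineMap.pi <|
      Fin.cons (AffineMap.const ℝ _ 1 - (∑ i, LinearMap.proj i).toAffineMap) AffineMap.proj

namespace simplexChart

variable {m : ℕ}

@[simp]
lemma apply_zero (x : Fin m → ℝ) : simplexChart m x 0 = 1 - ∑ i, x i := by
  simp [simplexChart]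

@[simp]
lemma apply_succ (x : Fin m → ℝ) (i : Fin m) : simplexChart m x i.succ = x i := rfl

lemma injective : Function.Injective (simplexChart m) := fun x y h =>
  funext fun i => by rw [← apply_succ x, h, apply_succ]

lemma range_eq : Set.range (simplexChart m) = {p | ∑ i, p i = 1} := by
  ext p
  constructor
  · rintro ⟨x, rfl⟩
    simp [Fin.sum_univ_succ]
  · intro hp
    rw [Set.mem_ofPred_eq, Fin.sum_univ_succ] at hp
    refine ⟨fun i => p i.succ, PiLp.ext (Fin.cases ?_ fun i => apply_succ _ i)⟩
    rw [apply_zero, ← hp, add_sub_cancel_right]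

lemma exists_setLIntegral_sum_eq_one (m : ℕ) :
    ∃ κ : ℝ≥0∞, ∀ f : EuclideanSpace ℝ (Fin (m + 1)) → ℝ≥0∞,
      ∫⁻ p in {p | ∑ i, p i = 1}, f p ∂surfMeasure (m + 1)
        = κ * ∫⁻ x, f (simplexChart m x) := by
  obtain ⟨κ, hκ⟩ : ∃ κ : NNReal, (surfMeasure (m + 1)).comap (simplexChart m) = κ • volume := by
    simpa [surfMeasure] using
      exists_comap_hausdorffMeasure_eq_smul (injective (m := m)) (volume : Measure (Fin m → ℝ))
  have hemb := measurableEmbedding_of_injective_affineMap (injective (m := m))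
  refine ⟨κ, fun f => ?_⟩
  rw [← range_eq, ← hemb.map_comap, hemb.lintegral_map, hκ, lintegral_smul_measure]
  rfl

end simplexChart

section Dirichlet

variable {k m : ℕ}

lemma measurableSet_forall_nonneg (k : ℕ) :
    MeasurableSet {p : EuclideanSpace ℝ (Fin k) | ∀ i, 0 ≤ p i} := by
  simp only [Set.ofPred_forall]
  exact .iInter fun i => measurableSet_le (by fun_prop) (by fun_prop)

lemma measurableSet_probSimplex (k : ℕ) : MeasurableSet (probSimplex k) :=
  (measurableSet_forall_nonneg k).inter (measurableSet_eq_fun (by fun_prop) (by fun_prop))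

lemma setLIntegral_probSimplex_prod_riemannLiouvilleKernel_eq_hyperplane
    (μ : Measure (EuclideanSpace ℝ (Fin k))) (α : Fin k → ℝ) :
    ∫⁻ p in probSimplex k, ∏ i, riemannLiouvilleKernel (α i) (p i) ∂μ
      = ∫⁻ p in {p | ∑ i, p i = 1}, ∏ i, riemannLiouvilleKernel (α i) (p i) ∂μ := by
  have hinter : probSimplex k = {p | ∀ i, 0 ≤ p i} ∩ {p | ∑ i, p i = 1} := rfl
  rw [hinter, ← Measure.restrict_restrict (measurableSet_forall_nonneg k)]
  exact setLIntegral_eq_of_support_subset fun p hp i => le_of_not_gt fun hi =>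
    hp (prod_eq_zero (mem_univ i) (riemannLiouvilleKernel.apply_of_neg hi))

lemma exists_setLIntegral_probSimplex_prod_riemannLiouvilleKernel (m : ℕ) :
    ∃ κ : ℝ≥0∞, ∀ α : Fin (m + 1) → ℝ, (∀ i, 0 < α i) →
      ∫⁻ p in probSimplex (m + 1), ∏ i, riemannLiouvilleKernel (α i) (p i) ∂surfMeasure (m + 1)
        = κ * riemannLiouvilleKernel (∑ i, α i) 1 := by
  obtain ⟨κ, hκ⟩ := simplexChart.exists_setLIntegral_sum_eq_one m
  refine ⟨κ, fun α hα => ?_⟩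
  calc ∫⁻ p in probSimplex (m + 1), ∏ i, riemannLiouvilleKernel (α i) (p i) ∂surfMeasure (m + 1)
      = κ * ∫⁻ x : Fin m → ℝ, (∏ i, riemannLiouvilleKernel (α i.succ) (x i))
          * riemannLiouvilleKernel (α 0) (1 - ∑ i, x i) := by
        rw [setLIntegral_probSimplex_prod_riemannLiouvilleKernel_eq_hyperplane, hκ]
        simp only [Fin.prod_univ_succ, simplexChart.apply_zero, simplexChart.apply_succ, mul_comm]
    _ = κ * riemannLiouvilleKernel (∑ i, α i) 1 := by
        rw [riemannLiouvilleKernel.lintegral_prod_mul_sub_sum (fun i => hα i.succ) (hα 0)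
          one_ne_zero, Fin.sum_univ_succ, add_comm (α 0)]

lemma setLIntegral_probSimplex_prod_riemannLiouvilleKernel {α : Fin (m + 1) → ℝ}
    (hα : ∀ i, 0 < α i) :
    ∫⁻ p in probSimplex (m + 1), ∏ i, riemannLiouvilleKernel (α i) (p i) ∂surfMeasure (m + 1)
      = surfMeasure (m + 1) (probSimplex (m + 1))
        * ENNReal.ofReal (Real.Gamma (m + 1) / Real.Gamma (∑ i, α i)) := by
  obtain ⟨κ, hκ⟩ := exists_setLIntegral_probSimplex_prod_riemannLiouvilleKernel m
  have hvol : surfMeasure (m + 1) (probSimplex (m + 1))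
      = κ * ENNReal.ofReal (1 / Real.Gamma (m + 1)) := by
    calc surfMeasure (m + 1) (probSimplex (m + 1))
        = ∫⁻ p in probSimplex (m + 1), ∏ i, riemannLiouvilleKernel 1 (p i)
            ∂surfMeasure (m + 1) := by
          rw [← setLIntegral_one]
          refine setLIntegral_congr_fun (measurableSet_probSimplex _) fun p hp => ?_
          simp [riemannLiouvilleKernel.apply_of_nonneg (hp.1 _)]
      _ = κ * ENNReal.ofReal (1 / Real.Gamma (m + 1)) := by
          rw [hκ _ fun _ => one_pos, riemannLiouvilleKernel.apply_of_nonneg zero_le_one]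
          simp
  rw [hκ α hα, hvol, mul_assoc, ← ENNReal.ofReal_mul (by positivity),
    riemannLiouvilleKernel.apply_of_nonneg zero_le_one, Real.one_rpow]
  congr 3
  field_simp

theorem setIntegral_probSimplex_prod_rpow_div_Gamma {α : Fin (m + 1) → ℝ} (hα : ∀ i, 0 < α i) :
    ∫ p in probSimplex (m + 1), ∏ i, p i ^ (α i - 1) / Real.Gamma (α i) ∂surfMeasure (m + 1)
      = (surfMeasure (m + 1) (probSimplex (m + 1))).toReal
        * (Real.Gamma (m + 1) / Real.Gamma (∑ i, α i)) := by
  have hfactor : ∀ p ∈ probSimplex (m + 1), ∀ i, 0 ≤ p i ^ (α i - 1) / Real.Gamma (α i) :=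
    fun p hp i => div_nonneg (Real.rpow_nonneg (hp.1 i) _) (Real.Gamma_pos_of_pos (hα i)).le
  have hkernel : ∀ p ∈ probSimplex (m + 1),
      ENNReal.ofReal (∏ i, p i ^ (α i - 1) / Real.Gamma (α i))
        = ∏ i, riemannLiouvilleKernel (α i) (p i) := fun p hp => by
    rw [ENNReal.ofReal_prod_of_nonneg fun i _ => hfactor p hp i]
    exact prod_congr rfl fun i _ => (riemannLiouvilleKernel.apply_of_nonneg (hp.1 i)).symm
  have hΓ : 0 ≤ Real.Gamma (m + 1) / Real.Gamma (∑ i, α i) :=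
    div_nonneg (Real.Gamma_nonneg_of_nonneg (by positivity))
      (Real.Gamma_nonneg_of_nonneg (sum_nonneg fun i _ => (hα i).le))
  rw [integral_eq_lintegral_of_nonneg_ae
      (ae_restrict_of_forall_mem (measurableSet_probSimplex _) fun p hp =>
        prod_nonneg fun i _ => hfactor p hp i)
      (Measurable.aestronglyMeasurable (by fun_prop)),
    setLIntegral_congr_fun (measurableSet_probSimplex _) hkernel,
    setLIntegral_probSimplex_prod_riemannLiouvilleKernel hα, ENNReal.toReal_mul,
    ENNReal.toReal_ofReal hΓ]

end Dirichlet

section Multinomial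

lemma multProb_eq_factorial_mul_prod (k : ℕ) (p : EuclideanSpace ℝ (Fin k)) (c : Fin k → ℕ) :
    multProb k p c = (∑ i, c i).factorial * ∏ i, p i ^ c i / (c i).factorial := by
  have hspec : ((∑ i, c i).factorial : ℝ)
      = (∏ i, ((c i).factorial : ℝ)) * Nat.multinomial univ c := by
    exact_mod_cast (Nat.multinomial_spec univ c).symm
  rw [multProb, prod_div_distrib, hspec]
  field_simp

theorem setIntegral_probSimplex_multProb (m : ℕ) (c : Fin (m + 1) → ℕ) :
    ∫ p in probSimplex (m + 1), multProb (m + 1) p c ∂surfMeasure (m + 1)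
      = (surfMeasure (m + 1) (probSimplex (m + 1))).toReal / (∑ i, c i + m).choose m := by
  have hdirichlet := setIntegral_probSimplex_prod_rpow_div_Gamma (α := fun i => (c i : ℝ) + 1)
    fun i => by positivity
  have hsum : ∑ i, ((c i : ℝ) + 1) = ((∑ i, c i + m : ℕ) : ℝ) + 1 := by
    simp [sum_add_distrib, add_assoc]
  simp only [add_sub_cancel_right, Real.rpow_natCast, Real.Gamma_nat_eq_factorial, hsum]
    at hdirichlet
  simp_rw [multProb_eq_factorial_mul_prod]
  rw [integral_const_mul, hdirichlet, ← Nat.choose_symm_add, Nat.cast_add_choose]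
  field_simp

lemma card_piAntidiag_univ {ι : Type*} [Fintype ι] [DecidableEq ι] (n : ℕ) :
    (piAntidiag (univ : Finset ι) n).card = (Fintype.card ι).multichoose n := by
  rw [← map_sym_eq_piAntidiag, card_map, sym_univ, card_univ, Sym.card_sym_eq_multichoose]

lemma discSimplex_eq_piAntidiag (k n : ℕ) : discSimplex k n = piAntidiag univ n := by
  ext c
  have hle (h : ∑ i, c i = n) (i : Fin k) : c i < n + 1 :=
    Nat.lt_succ_of_le (h ▸ single_le_sum (fun _ _ => Nat.zero_le _) (mem_univ i))
  simpa [discSimplex] using hle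

lemma card_discSimplex_succ (m n : ℕ) : (discSimplex (m + 1) n).card = (n + m).choose m := by
  rw [discSimplex_eq_piAntidiag, card_piAntidiag_univ, Fintype.card_fin, Nat.multichoose_eq,
    Nat.add_right_comm, Nat.add_sub_cancel, add_comm m n, Nat.choose_symm_add]

end Multinomial

/-- A uniformly random multinomial parameter induces the uniform distribution on empirical
distributions: for every `p̂ ∈ Δ_{k,n}`, `∫_{Δ_k} P_p(p̂) dσ(p) = σ(Δ_k)/|Δ_{k,n}|`, and
`|Δ_{k,n}| = C(n+k-1, k-1)`. -/
theorem uniform_prior_induces_uniform (k n : ℕ) (hk : 2 ≤ k) (hn : 1 ≤ n) :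
    (∀ c ∈ discSimplex k n,
      ∫ p in probSimplex k, multProb k p c ∂(surfMeasure k)
        = (surfMeasure k (probSimplex k)).toReal / ((discSimplex k n).card : ℝ))
    ∧ (discSimplex k n).card = (n + k - 1).choose (k - 1) := by
  obtain ⟨m, rfl⟩ : ∃ m, k = m + 1 := ⟨k - 1, by omega⟩
  refine ⟨fun c hc => ?_, card_discSimplex_succ m n⟩
  have hsum : ∑ i, c i = n := (mem_filter.1 hc).2
  rw [setIntegral_probSimplex_multProb, hsum, card_discSimplex_succ]
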